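/- arXiv:2302.06563 — 2 statements merged into one kernel-verified Lean document; each statement's English description precedes it below -/
import Mathlib

section
/- Let n ∈ ℕ and let t ∈ ℕ satisfy t ≥ n − 1. Then the maximum cardinality of a set C ⊆ {0,1}^n of binary words of length n such that d_id(X,Y) > 2t for all distinct X, Y ∈ C is exactly n + 1 (achieved by any code whose codewords have pairwise distinct Hamming weights). -/
/-!
Deleting or inserting a `0` preserves the Hamming weight, so words of different weights are at
distance `⊤`; hence one word of each weight `0, …, n` gives a code of size `n + 1`.

Conversely, two distinct words of length `n` and common weight `w` have `w ≥ 1`, since the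
all-zero word is the only one of weight `0`. Deleting all `n - w` zeros of the first word leads to
`1 ^ w`, and inserting `n - w` zeros leads from there to the second, so their distance is at most
`2 (n - w) ≤ 2 (n - 1) ≤ 2 t`. Thus the weight is injective on any admissible code
(`dId_le_of_weight_eq`), and it takes only `n + 1` values.
-/

/-- `Y` is obtained from `X` by deleting one occurrence of the symbol `0`
(represented by `false`). -/
def ZeroDel (X Y : List Bool) : Prop :=
  ∃ A B : List Bool, X = A ++ false :: B ∧ Y = A ++ B

/-- One elementary step: deletion or insertion of a single `0`. -/
def ZeroStep (X Y : List Bool) : Prop := ZeroDel X Y ∨ ZeroDel Y X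

/-- `ZeroChain k X Y` : `Y` is obtained from `X` by exactly `k` elementary steps. -/
def ZeroChain : ℕ → List Bool → List Bool → Prop
  | 0, X, Y => X = Y
  | k + 1, X, Y => ∃ Z, ZeroStep X Z ∧ ZeroChain k Z Y

/-- The deletion/insertion-of-`0`'s distance `d_id`, valued in `ℕ∞`
(`⊤` when no finite sequence of steps transforms `X` into `Y`). -/
noncomputable def dId (X Y : List Bool) : ℕ∞ :=
  sInf {n : ℕ∞ | ∃ k : ℕ, n = k ∧ ZeroChain k X Y}

theorem ZeroStep.symm {X Y : List Bool} (h : ZeroStep X Y) : ZeroStep Y X := Or.symm h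

theorem ZeroDel.cons {X Y : List Bool} (b : Bool) (h : ZeroDel X Y) :
    ZeroDel (b :: X) (b :: Y) := by
  obtain ⟨A, B, rfl, rfl⟩ := h
  exact ⟨b :: A, B, rfl, rfl⟩

theorem ZeroStep.cons {X Y : List Bool} (b : Bool) (h : ZeroStep X Y) :
    ZeroStep (b :: X) (b :: Y) :=
  Or.imp (ZeroDel.cons b) (ZeroDel.cons b) h

theorem ZeroChain.cons {k : ℕ} {X Y : List Bool} (b : Bool) (h : ZeroChain k X Y) :
    ZeroChain k (b :: X) (b :: Y) := by
  induction k generalizing X with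
  | zero => exact congrArg (b :: ·) h
  | succ k ih =>
    obtain ⟨Z, hXZ, hZY⟩ := h
    exact ⟨b :: Z, hXZ.cons b, ih hZY⟩

theorem ZeroChain.append {k l : ℕ} {X Y Z : List Bool} (h₁ : ZeroChain k X Y)
    (h₂ : ZeroChain l Y Z) : ZeroChain (k + l) X Z := by
  induction k generalizing X with
  | zero =>
    obtain rfl : X = Y := h₁
    simpa using h₂
  | succ k ih =>
    obtain ⟨W, hXW, hWY⟩ := h₁
    rw [Nat.add_right_comm]
    exact ⟨W, hXW, ih hWY⟩

theorem ZeroChain.symm {k : ℕ} {X Y : List Bool} (h : ZeroChain k X Y) : ZeroChain k Y X := by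
  induction k generalizing X with
  | zero => exact Eq.symm h
  | succ k ih =>
    obtain ⟨Z, hXZ, hZY⟩ := h
    exact (ih hZY).append (l := 1) ⟨X, hXZ.symm, rfl⟩

theorem ZeroDel.count_true {X Y : List Bool} (h : ZeroDel X Y) :
    X.count true = Y.count true := by
  obtain ⟨A, B, rfl, rfl⟩ := h
  simp

theorem ZeroChain.count_true {k : ℕ} {X Y : List Bool} (h : ZeroChain k X Y) :
    X.count true = Y.count true := by
  induction k generalizing X with
  | zero => exact congrArg (List.count true) h
  | succ k ih =>
    obtain ⟨Z, hXZ, hZY⟩ := h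
    exact (hXZ.elim (·.count_true) (·.count_true.symm)).trans (ih hZY)

/-- Deleting the zeros of a word one by one leaves the all-one word of the same weight. -/
theorem zeroChain_replicate (X : List Bool) :
    ZeroChain (X.count false) X (List.replicate (X.count true) true) := by
  induction X with
  | nil => rfl
  | cons b X ih =>
    cases b with
    | false =>
      rw [List.count_cons_self, List.count_cons_of_ne (by decide)]
      exact ⟨X, Or.inl ⟨[], X, rfl, rfl⟩, ih⟩
    | true => simpa [List.replicate_succ] using ih.cons true

theorem dId_le_of_zeroChain {k : ℕ} {X Y : List Bool} (h : ZeroChain k X Y) :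
    dId X Y ≤ k :=
  sInf_le ⟨k, rfl, h⟩

theorem dId_eq_top {X Y : List Bool} (h : X.count true ≠ Y.count true) : dId X Y = ⊤ := by
  refine sInf_eq_top.2 ?_
  rintro _ ⟨k, -, hk⟩
  exact absurd hk.count_true h

theorem eq_replicate_false {X : List Bool} (h : X.count true = 0) :
    X = List.replicate X.length false := by
  refine List.eq_replicate_iff.2 ⟨rfl, fun b hb => ?_⟩
  cases b with
  | false => rfl
  | true => exact absurd hb (List.count_eq_zero.1 h)

/-- Distinct words of length `n` with the same weight are at distance at most `2 (n - 1)`, because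
each has at most `n - 1` zeros. -/
theorem dId_le_of_weight_eq {n : ℕ} {X Y : List Bool} (hX : X.length = n) (hY : Y.length = n)
    (hne : X ≠ Y) (hw : X.count true = Y.count true) :
    dId X Y ≤ ((2 * (n - 1) : ℕ) : ℕ∞) := by
  have hpos : X.count true ≠ 0 := fun h0 => hne <| by
    rw [eq_replicate_false h0, eq_replicate_false (hw.symm.trans h0), hX, hY]
  have hchain : ZeroChain (X.count false + Y.count false) X Y :=
    (zeroChain_replicate X).append (hw ▸ (zeroChain_replicate Y).symm)
  refine (dId_le_of_zeroChain hchain).trans (Nat.cast_le.2 ?_)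
  have h₁ := List.count_true_add_count_false X
  have h₂ := List.count_true_add_count_false Y
  omega

/-- For `t ≥ n - 1`, the maximum cardinality of a code `C ⊆ {0,1}ⁿ` with
`d_id(X,Y) > 2t` for all distinct `X, Y ∈ C` is exactly `n + 1`. -/
theorem max_card_code_of_large_t (n t : ℕ) (ht : n - 1 ≤ t) :
    IsGreatest
      {k : ℕ | ∃ C : Finset (List Bool),
        (∀ X ∈ C, X.length = n) ∧
        (∀ X ∈ C, ∀ Y ∈ C, X ≠ Y → ((2 * t : ℕ) : ℕ∞) < dId X Y) ∧
        C.card = k}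
      (n + 1) := by
  constructor
  · -- The code consisting of the words `1 ^ i 0 ^ (n - i)` for `0 ≤ i ≤ n`.
    let f : ℕ → List Bool := fun i => List.replicate i true ++ List.replicate (n - i) false
    have hcount : ∀ i, (f i).count true = i := fun i => by simp [f, List.count_replicate]
    have hinj : Function.Injective f := fun i j hij => by
      rw [← hcount i, ← hcount j, hij]
    refine ⟨(Finset.range (n + 1)).image f, ?_, ?_, ?_⟩
    · intro X hX
      obtain ⟨i, hi, rfl⟩ := Finset.mem_image.1 hX
      have := Finset.mem_range.1 hi
      simp only [f, List.length_append, List.length_replicate]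
      omega
    · intro X hX Y hY hne
      obtain ⟨i, -, rfl⟩ := Finset.mem_image.1 hX
      obtain ⟨j, -, rfl⟩ := Finset.mem_image.1 hY
      rw [dId_eq_top]
      · exact ENat.natCast_lt_top _
      · rw [hcount, hcount]
        exact fun hij => hne (congrArg f hij)
    · rw [Finset.card_image_of_injective _ hinj, Finset.card_range]
  · rintro k ⟨C, hlen, hdist, rfl⟩
    rw [← Finset.card_range (n + 1)]
    refine Finset.card_le_card_of_injOn (List.count true) ?_ ?_
    · intro X hX
      have := hlen X hX
      have := List.count_le_length (a := true) (l := X)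
      simp only [Finset.coe_range, Set.mem_Iio]
      omega
    · intro X hX Y hY hw
      by_contra hne
      refine (hdist X hX Y hY hne).not_ge ?_
      exact (dId_le_of_weight_eq (hlen X hX) (hlen Y hY) hne hw).trans
        (Nat.cast_le.2 (Nat.mul_le_mul_left 2 ht))
end

section
/- For all n ∈ ℕ and all integers t ≥ 1, there exists a code C ⊆ {0,1}^n with d_id(X,Y) ≥ 2t + 2 for all distinct X, Y ∈ C and |C| ≥ Σ_{w=0}^{n} ⌈C(n,w) / q_w^t⌉, where C(n,w) is the binomial coefficient and q_w denotes the smallest prime power strictly greater than w (the cardinality of the smallest finite field with more than w elements). -/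
/-- the smallest prime power strictly greater than `w` (the cardinality of the
smallest finite field with more than `w` elements) -/
noncomputable def smallestPrimePowGT (w : ℕ) : ℕ :=
  sInf {q : ℕ | w < q ∧ IsPrimePow q}

open Polynomial in
/-- The polynomial `∏ (z - a (i + j)) ^ vⱼ` of a word whose successive blocks of zeros have
lengths `v₀, v₁, …`; the offset `i` is the index given to the first block. -/
noncomputable def gapPoly {F : Type} [Field F] (a : ℕ → F) : ℕ → List Bool → F[X]
  | _, [] => 1
  | i, true :: X => gapPoly a (i + 1) X
  | i, false :: X => (Polynomial.X - Polynomial.C (a i)) * gapPoly a i X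

section GapPoly

open Polynomial

variable {F : Type} [Field F] (a : ℕ → F)

lemma gapPoly_monic (W : List Bool) : ∀ i, (gapPoly a i W).Monic := by
  induction W with
  | nil => intro i; exact monic_one
  | cons b W ih =>
    intro i
    cases b
    · exact (monic_X_sub_C (a i)).mul (ih i)
    · exact ih (i + 1)

lemma gapPoly_natDegree (W : List Bool) :
    ∀ i, (gapPoly a i W).natDegree + W.count true = W.length := by
  induction W with
  | nil => intro i; simp [gapPoly]
  | cons b W ih =>
    intro i
    cases b
    · have h := ih i
      rw [gapPoly, (monic_X_sub_C (a i)).natDegree_mul (gapPoly_monic a W i), natDegree_X_sub_C]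
      simp
      omega
    · have h := ih (i + 1)
      rw [gapPoly]
      simp
      omega

lemma gapPoly_append_false (A B : List Bool) :
    ∀ i, ∃ c : F, gapPoly a i (A ++ false :: B) = (X - C c) * gapPoly a i (A ++ B) := by
  induction A with
  | nil => intro i; exact ⟨a i, rfl⟩
  | cons b A ih =>
    intro i
    cases b
    · obtain ⟨c, hc⟩ := ih i
      refine ⟨c, ?_⟩
      simp only [List.cons_append, gapPoly, hc]
      ring
    · exact ih (i + 1)

lemma gapPoly_of_zeroDel {W Z : List Bool} (h : ZeroDel W Z) (i : ℕ) :
    ∃ c : F, gapPoly a i W = (X - C c) * gapPoly a i Z := by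
  obtain ⟨A, B, rfl, rfl⟩ := h
  exact gapPoly_append_false a A B i

/-- Words joined by `k` steps have polynomials that share all but at most `k` linear factors,
counted in the two words together. -/
lemma gapPoly_of_chain {i k : ℕ} : ∀ {W Z : List Bool}, ZeroChain k W Z →
    ∃ G U V : F[X], G.Monic ∧ U.Monic ∧ V.Monic ∧ gapPoly a i W = G * U ∧
      gapPoly a i Z = G * V ∧ U.natDegree + V.natDegree ≤ k := by
  induction k with
  | zero =>
    intro W Z h
    obtain rfl : W = Z := h
    exact ⟨gapPoly a i W, 1, 1, gapPoly_monic a W i, monic_one, monic_one, by simp, by simp,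
      by simp⟩
  | succ k ih =>
    rintro W Z ⟨W', hs, hc⟩
    obtain ⟨G, U, V, hG, hU, hV, hW, hZ, hd⟩ := ih hc
    rcases hs with hs | hs
    · obtain ⟨c, h⟩ := gapPoly_of_zeroDel a hs i
      refine ⟨G, (X - C c) * U, V, hG, (monic_X_sub_C c).mul hU, hV, ?_, hZ, ?_⟩
      · rw [h, hW]; ring
      · rw [(monic_X_sub_C c).natDegree_mul hU, natDegree_X_sub_C]; omega
    · obtain ⟨c, h⟩ := gapPoly_of_zeroDel a hs i
      have hdvd : (X - C c) ∣ G * U := ⟨_, by rw [← hW, h]⟩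
      -- The linear factor removed from `G * U` is prime, so it comes out of `G` or out of `U`.
      rcases (prime_X_sub_C c).dvd_or_dvd hdvd with ⟨G', rfl⟩ | ⟨U', rfl⟩
      · have hG' : G'.Monic := (monic_X_sub_C c).of_mul_monic_left hG
        refine ⟨G', U, (X - C c) * V, hG', hU, (monic_X_sub_C c).mul hV, ?_, ?_, ?_⟩
        · apply mul_left_cancel₀ (X_sub_C_ne_zero c)
          rw [← h, hW]; ring
        · rw [hZ]; ring
        · rw [(monic_X_sub_C c).natDegree_mul hV, natDegree_X_sub_C]; omega
      · have hU' : U'.Monic := (monic_X_sub_C c).of_mul_monic_left hU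
        refine ⟨G, U', V, hG, hU', hV, ?_, hZ, ?_⟩
        · apply mul_left_cancel₀ (X_sub_C_ne_zero c)
          rw [← h, hW]; ring
        · rw [(monic_X_sub_C c).natDegree_mul hU', natDegree_X_sub_C] at hd; omega

lemma gapPoly_eval_ne_zero {a : ℕ → F} {w i : ℕ} (ha : Set.InjOn a (Set.Iic w))
    (W : List Bool) : ∀ j, i < j → j + W.count true ≤ w → (gapPoly a j W).eval (a i) ≠ 0 := by
  induction W with
  | nil => intro j _ _; simp [gapPoly]
  | cons b W ih =>
    intro j hij hj
    cases b
    · simp only [gapPoly, eval_mul, eval_sub, eval_X, eval_C]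
      simp at hj
      refine mul_ne_zero (sub_ne_zero.2 fun h => ?_) (ih j hij hj)
      have := ha (show i ≤ w by omega) (show j ≤ w by omega) h
      omega
    · simp at hj
      exact ih (j + 1) (by omega) (by omega)

lemma gapPoly_inj {a : ℕ → F} {w : ℕ} (ha : Set.InjOn a (Set.Iic w)) (W : List Bool) :
    ∀ (Z : List Bool) (i : ℕ), i + W.count true ≤ w → W.count true = Z.count true →
      gapPoly a i W = gapPoly a i Z → W = Z := by
  induction W with
  | nil =>
    intro Z i hi hc h
    have h1 := gapPoly_natDegree a Z i
    rw [← h] at h1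
    simp [gapPoly] at h1 hc
    rw [← hc] at h1
    exact (List.length_eq_zero_iff.1 h1.symm).symm
  | cons b W ih =>
    intro Z i hi hc h
    -- `a i` is a root of the polynomial exactly when the word starts with a `0`.
    rcases b with _ | _ <;> rcases Z with _ | ⟨_ | _, Z⟩
    · have := congrArg (eval (a i)) h
      simp [gapPoly] at this
    · simp at hi hc
      rw [ih Z i hi hc (mul_left_cancel₀ (X_sub_C_ne_zero (a i)) h)]
    · simp at hi hc
      have := congrArg (eval (a i)) h
      simp [gapPoly] at this
      exact absurd this.symm
        (gapPoly_eval_ne_zero ha Z (i + 1) (by omega) (by omega))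
    · simp at hc
    · simp at hi hc
      have := congrArg (eval (a i)) h
      simp [gapPoly] at this
      exact absurd this
        (gapPoly_eval_ne_zero ha W (i + 1) (by omega) (by omega))
    · simp at hi hc
      rw [ih Z (i + 1) (by omega) hc h]

/-- Two words of the same length and weight which are fewer than `2t + 2` steps apart and whose
polynomials agree in the `t` coefficients below the leading one are equal. -/
lemma eq_of_chain_of_coeff {a : ℕ → F} {n w t k : ℕ} (ha : Set.InjOn a (Set.Iic w))
    {W Z : List Bool} (hWn : W.length = n) (hZn : Z.length = n) (hWw : W.count true = w)
    (hZw : Z.count true = w) (hc : ZeroChain k W Z) (hk : k < 2 * t + 2)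
    (hco : ∀ j < t, (gapPoly a 0 W).coeff (n - w - 1 - j) = (gapPoly a 0 Z).coeff (n - w - 1 - j)) :
    W = Z := by
  apply gapPoly_inj ha W Z 0 (by omega) (by omega)
  by_contra hne
  obtain ⟨G, U, V, hG, hU, hV, hW, hZ, hd⟩ := gapPoly_of_chain a (i := 0) hc
  have dW := gapPoly_natDegree a W 0
  have dZ := gapPoly_natDegree a Z 0
  have mW := gapPoly_monic a W 0
  have mZ := gapPoly_monic a Z 0
  have dW' : (gapPoly a 0 W).natDegree = n - w := by omega
  have dZ' : (gapPoly a 0 Z).natDegree = n - w := by omega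
  have eW := congrArg natDegree hW
  have eZ := congrArg natDegree hZ
  rw [hG.natDegree_mul hU] at eW
  rw [hG.natDegree_mul hV] at eZ
  have hD : gapPoly a 0 W - gapPoly a 0 Z ≠ 0 := sub_ne_zero.2 hne
  have hdvd : G ∣ gapPoly a 0 W - gapPoly a 0 Z := ⟨U - V, by rw [hW, hZ]; ring⟩
  have h1 := natDegree_le_of_dvd hdvd hD
  have h2 := natDegree_sub_le (gapPoly a 0 W) (gapPoly a 0 Z)
  rw [dW', dZ', max_self] at h2
  have h3 := leadingCoeff_ne_zero.2 hD
  rw [leadingCoeff, coeff_sub] at h3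
  set d := (gapPoly a 0 W - gapPoly a 0 Z).natDegree
  apply h3
  rw [sub_eq_zero]
  rcases h2.eq_or_lt with h | h
  · rw [h]
    have e1 := mW.coeff_natDegree
    have e2 := mZ.coeff_natDegree
    rw [dW'] at e1
    rw [dZ'] at e2
    rw [e1, e2]
  · have := hco (n - w - 1 - d) (by omega)
    rwa [show n - w - 1 - (n - w - 1 - d) = d by omega] at this

end GapPoly

lemma ZeroChain.count_true_s19 {k : ℕ} : ∀ {W Z : List Bool}, ZeroChain k W Z →
    W.count true = Z.count true := by
  induction k with
  | zero => intro W Z h; exact congrArg _ h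
  | succ k ih =>
    rintro W Z ⟨W', hs, hc⟩
    rw [← ih hc]
    rcases hs with ⟨A, B, rfl, rfl⟩ | ⟨A, B, rfl, rfl⟩ <;> simp

lemma exists_words (n : ℕ) : ∀ w, ∃ S : Finset (List Bool),
    (∀ W ∈ S, W.length = n ∧ W.count true = w) ∧ S.card = n.choose w := by
  induction n with
  | zero =>
    intro w
    cases w with
    | zero => exact ⟨{[]}, by simp, by simp⟩
    | succ w => exact ⟨∅, by simp, by simp⟩
  | succ n ih =>
    intro w
    cases w with
    | zero =>
      obtain ⟨S, hS, hc⟩ := ih 0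
      refine ⟨S.image (List.cons false), ?_, ?_⟩
      · intro W hW
        obtain ⟨V, hV, rfl⟩ := Finset.mem_image.1 hW
        have := hS V hV
        simp [this]
      · rw [Finset.card_image_of_injective _ List.cons_injective, hc]; simp
    | succ w =>
      obtain ⟨S, hS, hc⟩ := ih (w + 1)
      obtain ⟨T, hT, hd⟩ := ih w
      refine ⟨T.image (List.cons true) ∪ S.image (List.cons false), ?_, ?_⟩
      · intro W hW
        rcases Finset.mem_union.1 hW with hW | hW
        · obtain ⟨V, hV, rfl⟩ := Finset.mem_image.1 hW
          have := hT V hV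
          simp [this]
        · obtain ⟨V, hV, rfl⟩ := Finset.mem_image.1 hW
          have := hS V hV
          simp [this]
      · rw [Finset.card_union_of_disjoint,
          Finset.card_image_of_injective _ List.cons_injective,
          Finset.card_image_of_injective _ List.cons_injective, hc, hd, Nat.choose_succ_succ]
        rw [Finset.disjoint_left]
        intro W h1 h2
        obtain ⟨V, _, rfl⟩ := Finset.mem_image.1 h1
        obtain ⟨V', _, h⟩ := Finset.mem_image.1 h2
        simp at h

lemma smallestPrimePowGT_spec (w : ℕ) :
    w < smallestPrimePowGT w ∧ IsPrimePow (smallestPrimePowGT w) := by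
  have : {q : ℕ | w < q ∧ IsPrimePow q}.Nonempty := by
    obtain ⟨p, hp, hpp⟩ := Nat.exists_infinite_primes (w + 1)
    exact ⟨p, hp, hpp.isPrimePow⟩
  exact Nat.sInf_mem this

lemma exists_field (q : ℕ) (hq : IsPrimePow q) :
    ∃ (F : Type) (_ : Field F) (_ : Fintype F), Fintype.card F = q := by
  obtain ⟨f⟩ := (Fintype.nonempty_field_iff (α := Fin q)).2 (by simpa using hq)
  exact ⟨Fin q, f, inferInstance, Fintype.card_fin q⟩

lemma exists_injOn {F : Type} [Fintype F] [Nonempty F] {w : ℕ} (h : w < Fintype.card F) :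
    ∃ a : ℕ → F, Set.InjOn a (Set.Iic w) := by
  let e := (Fintype.equivFin F).symm
  refine ⟨fun i => if hi : i < Fintype.card F then e ⟨i, hi⟩ else Classical.arbitrary F, ?_⟩
  intro i hi j hj hij
  simp only [Set.mem_Iic] at hi hj
  simp only [show i < Fintype.card F by omega, show j < Fintype.card F by omega, dite_true] at hij
  simpa using e.injective hij

lemma exists_code_of_weight (n t w : ℕ) : ∃ S : Finset (List Bool),
    (∀ W ∈ S, W.length = n ∧ W.count true = w) ∧
    (∀ W ∈ S, ∀ Z ∈ S, ∀ k, ZeroChain k W Z → k < 2 * t + 2 → W = Z) ∧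
    n.choose w ⌈/⌉ (smallestPrimePowGT w) ^ t ≤ S.card := by
  classical
  obtain ⟨hw, hq⟩ := smallestPrimePowGT_spec w
  obtain ⟨F, _, _, hF⟩ := exists_field _ hq
  obtain ⟨a, ha⟩ := exists_injOn (F := F) (w := w) (by omega)
  obtain ⟨S, hS, hcard⟩ := exists_words n w
  let f : List Bool → (Fin t → F) := fun W j => (gapPoly a 0 W).coeff (n - w - 1 - j)
  obtain ⟨y, -, hy⟩ := Finset.exists_max_image (Finset.univ : Finset (Fin t → F))
    (fun y => (S.filter fun W => f W = y).card) Finset.univ_nonempty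
  refine ⟨S.filter fun W => f W = y, fun W hW => hS W (Finset.mem_filter.1 hW).1, ?_, ?_⟩
  · intro W hW Z hZ k hc hk
    rw [Finset.mem_filter] at hW hZ
    refine eq_of_chain_of_coeff ha (hS W hW.1).1 (hS Z hZ.1).1 (hS W hW.1).2 (hS Z hZ.1).2 hc hk ?_
    intro j hj
    exact congrFun (hW.2.trans hZ.2.symm) ⟨j, hj⟩
  · rw [ceilDiv_le_iff_le_mul (pow_pos (by omega) t), ← hcard]
    have := Finset.card_le_mul_card_image_of_maps_to (s := S) (t := Finset.univ) (f := f)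
      (fun _ _ => Finset.mem_univ _) _ hy
    simpa [hF, mul_comm] using this

/-- Lower bound on `t`-Sy0EC codes: for all `n` and `t ≥ 1` there exists a code
`C ⊆ {0,1}ⁿ` with `d_id(X,Y) ≥ 2t + 2` for all distinct `X, Y ∈ C` and
`|C| ≥ Σ_{w=0}^{n} ⌈C(n,w) / q_w^t⌉`, where `q_w` is the smallest prime power `> w`. -/
theorem exists_sy0ec_code_lower_bound (n t : ℕ) (ht : 1 ≤ t) :
    ∃ C : Finset (List Bool),
      (∀ X ∈ C, X.length = n) ∧
      (∀ X ∈ C, ∀ Y ∈ C, X ≠ Y → ((2 * t + 2 : ℕ) : ℕ∞) ≤ dId X Y) ∧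
      ∑ w ∈ Finset.range (n + 1), n.choose w ⌈/⌉ (smallestPrimePowGT w) ^ t ≤ C.card := by
  classical
  choose S hS hd hc using exists_code_of_weight n t
  refine ⟨(Finset.range (n + 1)).biUnion S, ?_, ?_, ?_⟩
  · intro X hX
    obtain ⟨w, -, hw⟩ := Finset.mem_biUnion.1 hX
    exact (hS w X hw).1
  · intro X hX Y hY hne
    obtain ⟨w, -, hw⟩ := Finset.mem_biUnion.1 hX
    obtain ⟨v, -, hv⟩ := Finset.mem_biUnion.1 hY
    refine le_sInf ?_
    rintro _ ⟨k, rfl, hk⟩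
    obtain rfl : w = v := by rw [← (hS w X hw).2, ← (hS v Y hv).2, hk.count_true_s19]
    by_contra hlt
    exact hne (hd w X hw Y hv k hk (by exact_mod_cast not_le.1 hlt))
  · rw [Finset.card_biUnion]
    · exact Finset.sum_le_sum fun w _ => hc w
    · intro w _ v _ hwv
      refine Finset.disjoint_left.2 ?_
      intro X h1 h2
      exact hwv (by rw [← (hS w X h1).2, ← (hS v X h2).2])
end
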